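/- (Theorem 4.1(v), chamber C₃₂₁.) Uniformly over all λ ∈ C⁺ and all X ∈ a with x3 ≥ x2 ≥ x1, one has E_k(X,λ) ≍ e^{⟨λ,X⁺⟩} / [ (1+α_λ α_{X⁺})^{k} (1+β_λ β_{X⁺})^{k} (1+γ_λ γ_{X⁺})^{k+1} ]. -/

import Mathlib

open Real MeasureTheory

/-- The rank-one Dunkl kernel `E_k^{rk1}(x,v)`. -/
noncomputable def Erk1 (k x v : ℝ) : ℝ :=
  (Real.Gamma (k + 1/2) / (Real.sqrt Real.pi * Real.Gamma k)) *
    ∫ z in (-1 : ℝ)..1, Real.exp (z * x * v) * (1 - z) ^ (k - 1) * (1 + z) ^ k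

/-- The normalized modified Bessel function `𝒥_a(y)`, for `a > -1/2`. -/
noncomputable def besselJ (a y : ℝ) : ℝ :=
  (Real.Gamma (a + 1) / (Real.sqrt Real.pi * Real.Gamma (a + 1/2))) *
    ∫ z in (-1 : ℝ)..1, Real.exp (y * z) * (1 - z ^ 2) ^ (a - 1/2)

/-- `W_k(λ,ν)`. -/
noncomputable def Wk (k l1 l2 l3 n1 n2 : ℝ) : ℝ :=
  ((l1 - n1) * (l1 - n2) * (n1 - l2) * (l2 - n2) * (n1 - l3) * (n2 - l3)) ^ (k - 1)

/-- `V(λ) = (λ1-λ2)(λ1-λ3)(λ2-λ3)`. -/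
def Vlam (l1 l2 l3 : ℝ) : ℝ := (l1 - l2) * (l1 - l3) * (l2 - l3)

/-- The `A₂` Dunkl kernel `E_k(X,λ)`, defined via the rank-one kernel formula. -/
noncomputable def EkA2 (k x1 x2 x3 l1 l2 l3 : ℝ) : ℝ :=
  (3 * Real.Gamma (3 * k) / (Vlam l1 l2 l3 ^ (2 * k) * Real.Gamma k ^ 2)) *
    ∫ n2 in l3..l2, ∫ n1 in l2..l1,
      ((n1 - l2) * (l1 - n2) * Erk1 k ((x1 - x2) / 2) (n1 - n2)
        + (l1 - n1) * (l2 - n2) * Erk1 k (-(x1 - x2) / 2) (n1 - n2))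
      * ((n1 - l3) * (n2 - l3)) * Real.exp ((x1 + x2 - 2 * x3) * (n1 + n2) / 2)
      * Wk k l1 l2 l3 n1 n2

/-!
Put `λ₁ - λ₂ = p`, `λ₂ - λ₃ = q`, `x₂ - x₁ = a`, `x₃ - x₂ = b`. The substitution
`ν₁ = λ₂ + p u`, `ν₂ = λ₃ + q v` turns the kernel into a constant times
`exp ⟨λ, X⁺⟩ / (p + q) ^ (2 k)` times the integral over the unit square of a core function
against the two Kummer densities `exp (-(q (a + b) v)) v ^ k (1 - v) ^ (k - 1)` and
`exp (-(p b u)) u ^ (k - 1) (1 - u) ^ (k - 1)`. These concentrate at `v ≲ 1 / (q (a + b))` and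
`u ≲ 1 / (p b)`. The rank-one kernels in the core are Kummer integrals, comparable to powers of
`1 + a (p u + q (1 - v))`, so the core varies slowly: moving `u` or `v` by a factor `r` away
from the concentration scale costs at most a fixed power of `1 + r`, which the exponentials
absorb. Hence the integral is comparable to the value of the core at `v = 0`,
`u = 1 / (1 + p b)` times the product of the two total masses.
-/

open Set

/-- The relation `x ≍ y` of the estimate, with its constant `C` made explicit. -/
def Comparable (C x y : ℝ) : Prop := C⁻¹ * y ≤ x ∧ x ≤ C * y

namespace Comparable

variable {C D x y x' y' z : ℝ}

lemma of_bounds {c : ℝ} (hc : 0 < c) (hC : 0 < C) (hy : 0 ≤ y) (hl : c * y ≤ x) (hu : x ≤ C * y) :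
    Comparable (C + c⁻¹) x y := by
  refine ⟨le_trans ?_ hl, hu.trans ?_⟩
  · gcongr
    exact inv_le_of_inv_le₀ hc (le_add_of_nonneg_left hC.le)
  · gcongr
    exact le_add_of_nonneg_right (inv_nonneg.2 hc.le)

lemma const_mul_self (hC : 0 < C) (hy : 0 ≤ y) : Comparable (C + C⁻¹) (C * y) y :=
  of_bounds hC hC hy le_rfl le_rfl

lemma mono (h : Comparable C x y) (hC : 0 < C) (hCD : C ≤ D) (hy : 0 ≤ y) : Comparable D x y :=
  ⟨le_trans (by gcongr) h.1, h.2.trans (by gcongr)⟩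

lemma nonneg (h : Comparable C x y) (hC : 0 < C) (hy : 0 ≤ y) : 0 ≤ x :=
  le_trans (by positivity) h.1

lemma trans (hxy : Comparable C x y) (hyz : Comparable D y z) (hC : 0 < C) :
    Comparable (C * D) x z := by
  constructor
  · rw [mul_inv, mul_assoc]
    exact le_trans (by gcongr; exact hyz.1) hxy.1
  · rw [mul_assoc]
    exact hxy.2.trans (by gcongr; exact hyz.2)

lemma add (h : Comparable C x y) (h' : Comparable C x' y') : Comparable C (x + x') (y + y') := by
  constructor
  · rw [mul_add]
    exact add_le_add h.1 h'.1
  · rw [mul_add]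
    exact add_le_add h.2 h'.2

lemma mul_left (h : Comparable C x y) (hz : 0 ≤ z) : Comparable C (z * x) (z * y) := by
  constructor
  · rw [mul_left_comm]
    exact mul_le_mul_of_nonneg_left h.1 hz
  · rw [mul_left_comm]
    exact mul_le_mul_of_nonneg_left h.2 hz

lemma mul (h : Comparable C x y) (h' : Comparable D x' y') (hC : 0 < C) (hD : 0 < D)
    (hy : 0 ≤ y) (hy' : 0 ≤ y') : Comparable (C * D) (x * x') (y * y') := by
  have hx := h.nonneg hC hy
  constructor
  · rw [mul_inv, mul_mul_mul_comm]
    exact mul_le_mul h.1 h'.1 (by positivity) hx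
  · rw [mul_mul_mul_comm]
    exact mul_le_mul h.2 h'.2 (h'.nonneg hD hy') (by positivity)

lemma rpow {N : ℝ} (h : Comparable C x y) (hC : 0 < C) (hy : 0 ≤ y) (hN : 0 ≤ N) :
    Comparable (C ^ N) (x ^ N) (y ^ N) := by
  constructor
  · rw [← inv_rpow hC.le, ← mul_rpow (inv_nonneg.2 hC.le) hy]
    exact rpow_le_rpow (by positivity) h.1 hN
  · rw [← mul_rpow hC.le hy]
    exact rpow_le_rpow (h.nonneg hC hy) h.2 hN

end Comparable

lemma rpow_le_two_rpow_abs {x : ℝ} (hx : 1 / 2 ≤ x) (hx' : x ≤ 1) (e : ℝ) :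
    x ^ e ≤ 2 ^ |e| := by
  have hx0 : 0 < x := by linarith
  calc x ^ e = x⁻¹ ^ (-e) := by rw [inv_rpow hx0.le, rpow_neg hx0.le, inv_inv]
    _ ≤ x⁻¹ ^ |e| := rpow_le_rpow_of_exponent_le ((one_le_inv₀ hx0).2 hx') (neg_le_abs e)
    _ ≤ 2 ^ |e| := by
      gcongr
      exact inv_le_of_inv_le₀ two_pos (by simpa using hx)

lemma two_rpow_neg_abs_le_rpow {x : ℝ} (hx : 1 / 2 ≤ x) (hx' : x ≤ 1) (e : ℝ) :
    2 ^ (-|e|) ≤ x ^ e := by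
  have hx0 : 0 < x := by linarith
  have h := rpow_le_two_rpow_abs hx hx' (-e)
  rw [abs_neg, rpow_neg hx0.le] at h
  rw [rpow_neg two_pos.le]
  exact inv_le_of_inv_le₀ (by positivity) h

lemma one_add_rpow_mul_exp_neg_le {N x : ℝ} (hN : 0 ≤ N) (hx : 0 ≤ x) :
    (1 + x) ^ N * exp (-x) ≤ (1 + 2 * N) ^ N * exp (-(x / 2)) := by
  have hlin : 1 + x ≤ (1 + 2 * N) * exp (x / (1 + 2 * N)) := by
    calc 1 + x ≤ (1 + 2 * N) * (x / (1 + 2 * N) + 1) := by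
          field_simp
          linarith
      _ ≤ _ := by gcongr; exact add_one_le_exp _
  have hexp : x / (1 + 2 * N) * N ≤ x / 2 := by
    rw [div_mul_eq_mul_div, div_le_div_iff₀ (by positivity) two_pos]
    linarith
  calc (1 + x) ^ N * exp (-x)
      ≤ ((1 + 2 * N) * exp (x / (1 + 2 * N))) ^ N * exp (-x) := by gcongr
    _ = (1 + 2 * N) ^ N * exp (x / (1 + 2 * N) * N + -x) := by
        rw [mul_rpow (by positivity) (exp_pos _).le, ← exp_mul, mul_assoc, ← exp_add]
    _ ≤ (1 + 2 * N) ^ N * exp (-(x / 2)) := by gcongr; linarith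

/-- The integrand of Euler's integral for Kummer's confluent hypergeometric function. -/
noncomputable def kummerDensity (A B c s : ℝ) : ℝ :=
  exp (-(c * s)) * (s ^ (A - 1) * (1 - s) ^ (B - 1))

/-- Euler's integral for Kummer's function `₁F₁(A; A + B; -c)`, without the normalizing factor
`1 / Β(A, B)`. The rank-one Dunkl kernel is of this form. -/
noncomputable def kummerIntegral (A B c : ℝ) : ℝ := ∫ s in (0 : ℝ)..1, kummerDensity A B c s

section Kummer

variable {A B : ℝ}

lemma kummerDensity_nonneg (A B c : ℝ) {s : ℝ} (hs : s ∈ Icc (0 : ℝ) 1) :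
    0 ≤ kummerDensity A B c s :=
  mul_nonneg (exp_pos _).le
    (mul_nonneg (rpow_nonneg hs.1 _) (rpow_nonneg (sub_nonneg.2 hs.2) _))

lemma intervalIntegrable_kummerDensity (hA : 0 < A) (hB : 0 < B) (c : ℝ) :
    IntervalIntegrable (kummerDensity A B c) volume 0 1 := by
  have hbeta : IntervalIntegrable (fun s : ℝ ↦ s ^ (A - 1) * (1 - s) ^ (B - 1)) volume 0 1 := by
    have h := (Complex.betaIntegral_convergent (u := A) (v := B) (by simpa) (by simpa)).norm
    rw [intervalIntegrable_iff_integrableOn_Ioo_of_le zero_le_one] at h ⊢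
    refine h.congr_fun (fun s hs ↦ ?_) measurableSet_Ioo
    have hs1 : (1 - s : ℂ) = ((1 - s : ℝ) : ℂ) := by push_cast; rfl
    simp only [norm_mul, hs1, Complex.norm_cpow_eq_rpow_re_of_pos hs.1,
      Complex.norm_cpow_eq_rpow_re_of_pos (sub_pos.2 hs.2), Complex.sub_re, Complex.ofReal_re,
      Complex.one_re]
  exact hbeta.continuousOn_mul (by fun_prop)

lemma measurable_kummerIntegral (A B : ℝ) : Measurable (kummerIntegral A B) := by
  have h : Measurable (Function.uncurry (kummerDensity A B)) := by
    unfold kummerDensity Function.uncurry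
    fun_prop
  unfold kummerIntegral
  simp only [intervalIntegral.integral_of_le zero_le_one]
  exact (h.stronglyMeasurable.integral_prod_right (ν := volume.restrict (Ioc 0 1))).measurable

lemma kummerIntegral_reflect (A B c : ℝ) :
    kummerIntegral A B c = exp (-c) * kummerIntegral B A (-c) := by
  have h := intervalIntegral.integral_comp_sub_left (a := 0) (b := 1) (kummerDensity A B c) 1
  rw [sub_self, sub_zero] at h
  rw [kummerIntegral, ← h, kummerIntegral, ← intervalIntegral.integral_const_mul]
  congr 1 with s
  simp only [kummerDensity, sub_sub_cancel, ← mul_assoc, ← exp_add]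
  rw [mul_right_comm]
  congr 3
  ring

lemma kummerDensity_le (hA : 0 < A) {y s : ℝ} (hy : 0 < y) (hs : s ∈ Ioo (0 : ℝ) 1) :
    kummerDensity A B y s ≤ 2 ^ |B - 1| * (s ^ (A - 1) * exp (-(y * s)))
      + 2 * (1 + 2 * A) ^ A * y ^ (-A) * (1 - s) ^ (B - 1) := by
  obtain ⟨hs0, hs1⟩ := hs
  have h1s : 0 < 1 - s := sub_pos.2 hs1
  have : 0 < s ^ (A - 1) := rpow_pos_of_pos hs0 _
  have : 0 < (1 - s) ^ (B - 1) := rpow_pos_of_pos h1s _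
  unfold kummerDensity
  rcases le_total s (1 / 2) with h | h
  · calc _ = (1 - s) ^ (B - 1) * (s ^ (A - 1) * exp (-(y * s))) := by ring
      _ ≤ 2 ^ |B - 1| * (s ^ (A - 1) * exp (-(y * s))) := by
        gcongr
        exact rpow_le_two_rpow_abs (by linarith) (by linarith) _
      _ ≤ _ := le_add_of_nonneg_right (by positivity)
  · have hexp : (y * s) ^ A * exp (-(y * s)) ≤ (1 + 2 * A) ^ A := by
      calc (y * s) ^ A * exp (-(y * s)) ≤ (1 + y * s) ^ A * exp (-(y * s)) := by gcongr; linarith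
        _ ≤ (1 + 2 * A) ^ A * exp (-(y * s / 2)) :=
          one_add_rpow_mul_exp_neg_le hA.le (by positivity)
        _ ≤ (1 + 2 * A) ^ A :=
          mul_le_of_le_one_right (by positivity)
            (exp_le_one_iff.2 (neg_nonpos.2 (by positivity)))
    calc _ = s⁻¹ * ((y * s) ^ A * exp (-(y * s))) * y ^ (-A) * (1 - s) ^ (B - 1) := by
          rw [mul_rpow hy.le hs0.le, rpow_neg hy.le, rpow_sub_one hs0.ne']
          field_simp
      _ ≤ 2 * (1 + 2 * A) ^ A * y ^ (-A) * (1 - s) ^ (B - 1) := by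
        gcongr
        exact inv_le_of_inv_le₀ two_pos (by simpa using h)
      _ ≤ _ := le_add_of_nonneg_left (by positivity)

lemma exists_kummerIntegral_le (hA : 0 < A) (hB : 0 < B) :
    ∃ C > 0, ∀ y > 0, kummerIntegral A B y ≤ C * y ^ (-A) := by
  refine ⟨2 ^ |B - 1| * Gamma A + 2 * (1 + 2 * A) ^ A * B⁻¹, ?_, fun y hy ↦ ?_⟩
  · have := Gamma_pos_of_pos hA
    positivity
  have hint : IntegrableOn (fun s : ℝ ↦ s ^ (A - 1) * exp (-(y * s))) (Ioi 0) := by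
    simpa only [rpow_one, neg_mul] using
      integrableOn_rpow_mul_exp_neg_mul_rpow (s := A - 1) (by linarith) one_pos hy
  have hint₁ : IntervalIntegrable (fun s : ℝ ↦ s ^ (A - 1) * exp (-(y * s))) volume 0 1 :=
    (intervalIntegrable_iff_integrableOn_Ioc_of_le zero_le_one).2
      (hint.mono_set Ioc_subset_Ioi_self)
  have hint₂ : IntervalIntegrable (fun s : ℝ ↦ (1 - s) ^ (B - 1)) volume 0 1 := by
    simpa using (intervalIntegral.intervalIntegrable_rpow' (a := 1) (b := 0) (r := B - 1)
      (by linarith)).comp_sub_left 1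
  have hgamma : ∫ s in (0 : ℝ)..1, s ^ (A - 1) * exp (-(y * s)) ≤ Gamma A * y ^ (-A) := by
    rw [intervalIntegral.integral_of_le zero_le_one, mul_comm (Gamma A), rpow_neg hy.le,
      ← inv_rpow hy.le, ← one_div, ← integral_rpow_mul_exp_neg_mul_Ioi hA hy]
    refine setIntegral_mono_set hint ?_ Ioc_subset_Ioi_self.eventuallyLE
    exact (ae_restrict_mem measurableSet_Ioi).mono fun s hs ↦
      mul_nonneg (rpow_nonneg (le_of_lt hs) _) (exp_pos _).le
  have hbeta : ∫ s in (0 : ℝ)..1, (1 - s) ^ (B - 1) = B⁻¹ := by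
    rw [intervalIntegral.integral_comp_sub_left (fun s : ℝ ↦ s ^ (B - 1)),
      integral_rpow (Or.inl (by linarith))]
    simp [zero_rpow hB.ne']
  calc kummerIntegral A B y
      ≤ ∫ s in (0 : ℝ)..1, (2 ^ |B - 1| * (s ^ (A - 1) * exp (-(y * s)))
          + 2 * (1 + 2 * A) ^ A * y ^ (-A) * (1 - s) ^ (B - 1)) :=
        intervalIntegral.integral_mono_on_of_le_Ioo zero_le_one
          (intervalIntegrable_kummerDensity hA hB y)
          ((hint₁.const_mul _).add (hint₂.const_mul _)) fun s hs ↦ kummerDensity_le hA hy hs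
    _ = 2 ^ |B - 1| * (∫ s in (0 : ℝ)..1, s ^ (A - 1) * exp (-(y * s)))
          + 2 * (1 + 2 * A) ^ A * y ^ (-A) * B⁻¹ := by
        rw [intervalIntegral.integral_add (hint₁.const_mul _) (hint₂.const_mul _),
          intervalIntegral.integral_const_mul, intervalIntegral.integral_const_mul, hbeta]
    _ ≤ 2 ^ |B - 1| * (Gamma A * y ^ (-A)) + 2 * (1 + 2 * A) ^ A * y ^ (-A) * B⁻¹ := by gcongr
    _ = _ := by ring

/-- Growth factor in `s` of a function that varies slowly on the scale `1 / (1 + c)` where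
`kummerDensity A B c` concentrates. -/
def upperWeight (c s : ℝ) : ℝ := 1 + (1 + c) * s

/-- Decay factor matching `upperWeight`; the factor `1 - s` absorbs degeneration at `s = 1`. -/
def lowerWeight (c s : ℝ) : ℝ := min 1 ((1 + c) * s) * (1 - s)

lemma upperWeight_nonneg {c s : ℝ} (hc : 0 ≤ c) (hs : 0 ≤ s) : 0 ≤ upperWeight c s := by
  unfold upperWeight
  positivity

lemma lowerWeight_nonneg {c s : ℝ} (hc : 0 ≤ c) (hs : s ∈ Icc (0 : ℝ) 1) : 0 ≤ lowerWeight c s :=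
  have := hs.1
  mul_nonneg (le_min zero_le_one (by positivity)) (sub_nonneg.2 hs.2)

lemma intervalIntegrable_upperWeight {N : ℝ} (hA : 0 < A) (hB : 0 < B) (hN : 0 ≤ N) (c : ℝ) :
    IntervalIntegrable (fun s ↦ upperWeight c s ^ N * kummerDensity A B c s) volume 0 1 := by
  refine (intervalIntegrable_kummerDensity hA hB c).continuousOn_mul
    (Continuous.rpow_const ?_ fun _ ↦ Or.inr hN).continuousOn
  unfold upperWeight
  fun_prop

lemma intervalIntegrable_lowerWeight {N : ℝ} (hA : 0 < A) (hB : 0 < B) (hN : 0 ≤ N) (c : ℝ) :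
    IntervalIntegrable (fun s ↦ lowerWeight c s ^ N * kummerDensity A B c s) volume 0 1 := by
  refine (intervalIntegrable_kummerDensity hA hB c).continuousOn_mul
    (Continuous.rpow_const ?_ fun _ ↦ Or.inr hN).continuousOn
  unfold lowerWeight
  fun_prop

lemma upperWeight_rpow_mul_kummerDensity_le {N c s : ℝ} (hN : 0 ≤ N) (hc : 0 ≤ c)
    (hs : s ∈ Icc (0 : ℝ) 1) :
    upperWeight c s ^ N * kummerDensity A B c s
      ≤ (1 + 2 * N) ^ N * exp 1 * kummerDensity A B ((1 + c) / 2) s := by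
  obtain ⟨hs0, hs1⟩ := hs
  have : 0 ≤ s ^ (A - 1) * (1 - s) ^ (B - 1) :=
    mul_nonneg (rpow_nonneg hs0 _) (rpow_nonneg (sub_nonneg.2 hs1) _)
  have hexp : exp (-(c * s)) ≤ exp 1 * exp (-((1 + c) * s)) := by
    rw [← exp_add]
    gcongr
    linarith
  have hweight : upperWeight c s ^ N * exp (-((1 + c) * s))
      ≤ (1 + 2 * N) ^ N * exp (-((1 + c) * s / 2)) :=
    one_add_rpow_mul_exp_neg_le hN (by positivity)
  have := upperWeight_nonneg hc hs0
  calc upperWeight c s ^ N * kummerDensity A B c s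
      ≤ upperWeight c s ^ N
          * (exp 1 * exp (-((1 + c) * s)) * (s ^ (A - 1) * (1 - s) ^ (B - 1))) := by
        rw [kummerDensity]
        gcongr
    _ = exp 1 * (upperWeight c s ^ N * exp (-((1 + c) * s)))
          * (s ^ (A - 1) * (1 - s) ^ (B - 1)) := by ring
    _ ≤ exp 1 * ((1 + 2 * N) ^ N * exp (-((1 + c) * s / 2)))
          * (s ^ (A - 1) * (1 - s) ^ (B - 1)) := by gcongr
    _ = _ := by
        rw [kummerDensity, div_mul_eq_mul_div]
        ring

lemma exists_integral_upperWeight_le {N : ℝ} (hA : 0 < A) (hB : 0 < B) (hN : 0 ≤ N) :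
    ∃ C > 0, ∀ c, 0 ≤ c →
      ∫ s in (0 : ℝ)..1, upperWeight c s ^ N * kummerDensity A B c s ≤ C * (1 + c) ^ (-A) := by
  obtain ⟨C, hC, h⟩ := exists_kummerIntegral_le hA hB
  refine ⟨(1 + 2 * N) ^ N * exp 1 * (C * 2 ^ A), by positivity, fun c hc ↦ ?_⟩
  calc ∫ s in (0 : ℝ)..1, upperWeight c s ^ N * kummerDensity A B c s
      ≤ ∫ s in (0 : ℝ)..1,
          (1 + 2 * N) ^ N * exp 1 * kummerDensity A B ((1 + c) / 2) s :=
        intervalIntegral.integral_mono_on zero_le_one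
          (intervalIntegrable_upperWeight hA hB hN c)
          ((intervalIntegrable_kummerDensity hA hB _).const_mul _)
          fun s hs ↦ upperWeight_rpow_mul_kummerDensity_le hN hc hs
    _ = (1 + 2 * N) ^ N * exp 1 * kummerIntegral A B ((1 + c) / 2) := by
        rw [intervalIntegral.integral_const_mul, kummerIntegral]
    _ ≤ (1 + 2 * N) ^ N * exp 1 * (C * ((1 + c) / 2) ^ (-A)) := by
        gcongr
        exact h _ (by positivity)
    _ = _ := by
        rw [div_rpow (by positivity) two_pos.le, rpow_neg two_pos.le, div_inv_eq_mul]
        ring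

/-- On `[w, 2 * w]` with `w = 1 / (4 * (1 + c))` the exponential, the weight and the factor
`1 - s` are all bounded below. -/
lemma le_lowerWeight_rpow_mul_kummerDensity {N c s : ℝ} (hA : 0 < A) (hN : 0 ≤ N) (hc : 0 ≤ c)
    (hs : s ∈ Icc (1 / (4 * (1 + c))) (2 * (1 / (4 * (1 + c))))) :
    (1 / 8) ^ N * exp (-1) * 2 ^ (-|B - 1|) * (1 / 4) ^ A * 2 * (1 + c) * (1 + c) ^ (-A)
      ≤ lowerWeight c s ^ N * kummerDensity A B c s := by
  set w := 1 / (4 * (1 + c)) with hw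
  have hw0 : 0 < w := by positivity
  have hwc : (1 + c) * w = 1 / 4 := by rw [hw]; field_simp
  have hw4 : w ≤ 1 / 4 := by nlinarith
  obtain ⟨hws, hsw⟩ := hs
  have hs0 : 0 < s := hw0.trans_le hws
  have hΛw : 1 / 4 ≤ (1 + c) * s := hwc ▸ (by gcongr)
  have hΛs : (1 + c) * s ≤ 1 / 2 := by nlinarith
  have hweight : 1 / 8 ≤ lowerWeight c s := by
    rw [lowerWeight, min_eq_right (by linarith)]
    nlinarith
  have hexp : exp (-1) ≤ exp (-(c * s)) := by
    gcongr
    linarith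
  have hpow : (1 / 4) ^ A * 2 * (1 + c) * (1 + c) ^ (-A) ≤ s ^ (A - 1) := by
    calc (1 / 4) ^ A * 2 * (1 + c) * (1 + c) ^ (-A) = w ^ A / (2 * w) := by
          have hwA : w ^ A = (1 / 4) ^ A * (1 + c) ^ (-A) := by
            rw [hw, ← div_div, div_rpow (by norm_num) (by positivity), rpow_neg (by positivity),
              div_eq_mul_inv]
          rw [hwA, hw]
          field_simp
          norm_num
      _ ≤ s ^ A / s := by gcongr
      _ = s ^ (A - 1) := (rpow_sub_one hs0.ne' A).symm
  calc _ = (1 / 8) ^ N * (exp (-1) * ((1 / 4) ^ A * 2 * (1 + c) * (1 + c) ^ (-A)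
          * 2 ^ (-|B - 1|))) := by ring
    _ ≤ lowerWeight c s ^ N * (exp (-(c * s)) * (s ^ (A - 1) * (1 - s) ^ (B - 1))) := by
        gcongr
        exact two_rpow_neg_abs_le_rpow (by linarith) (by linarith) _

lemma exists_le_integral_lowerWeight {N : ℝ} (hA : 0 < A) (hB : 0 < B) (hN : 0 ≤ N) :
    ∃ C > 0, ∀ c, 0 ≤ c →
      C * (1 + c) ^ (-A) ≤ ∫ s in (0 : ℝ)..1, lowerWeight c s ^ N * kummerDensity A B c s := by
  refine ⟨(1 / 8) ^ N * exp (-1) * 2 ^ (-|B - 1|) * (1 / 4) ^ A / 2, by positivity,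
    fun c hc ↦ ?_⟩
  set w := 1 / (4 * (1 + c)) with hw
  have hw0 : 0 < w := by positivity
  have hw1 : 2 * w ≤ 1 := by
    rw [hw, ← mul_div_assoc, div_le_one₀ (by positivity)]
    linarith
  have hint := intervalIntegrable_lowerWeight hA hB hN c
  calc _ = ∫ _ in w..2 * w, (1 / 8) ^ N * exp (-1) * 2 ^ (-|B - 1|) * (1 / 4) ^ A * 2 * (1 + c)
          * (1 + c) ^ (-A) := by
        rw [intervalIntegral.integral_const, smul_eq_mul, hw]
        field_simp
        norm_num
    _ ≤ ∫ s in w..2 * w, lowerWeight c s ^ N * kummerDensity A B c s := by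
        refine intervalIntegral.integral_mono_on (by linarith) (by simp) (hint.mono_set ?_)
          fun s hs ↦ le_lowerWeight_rpow_mul_kummerDensity hA hN hc hs
        rw [uIcc_of_le (by linarith), uIcc_of_le zero_le_one]
        exact Icc_subset_Icc hw0.le hw1
    _ ≤ ∫ s in (0 : ℝ)..1, lowerWeight c s ^ N * kummerDensity A B c s := by
        refine intervalIntegral.integral_mono_interval hw0.le (by linarith) hw1
          ((ae_restrict_mem measurableSet_Ioc).mono fun s hs ↦ ?_) hint
        have hs' := Ioc_subset_Icc_self hs
        exact mul_nonneg (rpow_nonneg (lowerWeight_nonneg hc hs') _)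
          (kummerDensity_nonneg A B c hs')

lemma exists_comparable_kummerIntegral (hA : 0 < A) (hB : 0 < B) :
    ∃ C > 0, ∀ c, 0 ≤ c → Comparable C (kummerIntegral A B c) ((1 + c) ^ (-A)) := by
  obtain ⟨c₁, hc₁, hl⟩ := exists_le_integral_lowerWeight hA hB le_rfl
  obtain ⟨c₂, hc₂, hu⟩ := exists_integral_upperWeight_le hA hB le_rfl
  simp only [rpow_zero, one_mul] at hl hu
  exact ⟨c₂ + c₁⁻¹, by positivity, fun c hc ↦
    .of_bounds hc₁ hc₂ (by positivity) (hl c hc) (hu c hc)⟩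

end Kummer

lemma integral_mul_integral_le_and_le {α β : Type*} [MeasurableSpace α] [MeasurableSpace β]
    {μ : Measure α} {ν : Measure β} [SFinite μ] [SFinite ν] {f : α → β → ℝ} {g₁ g₂ : α → ℝ}
    {h₁ h₂ : β → ℝ} (hf : AEStronglyMeasurable (Function.uncurry f) (μ.prod ν))
    (hg₁ : Integrable g₁ μ) (hh₁ : Integrable h₁ ν) (hg₂ : Integrable g₂ μ) (hh₂ : Integrable h₂ ν)
    (h0 : ∀ᵐ z ∂μ.prod ν, 0 ≤ g₁ z.1 * h₁ z.2)
    (hl : ∀ᵐ z ∂μ.prod ν, g₁ z.1 * h₁ z.2 ≤ f z.1 z.2)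
    (hu : ∀ᵐ z ∂μ.prod ν, f z.1 z.2 ≤ g₂ z.1 * h₂ z.2) :
    (∫ x, g₁ x ∂μ) * (∫ y, h₁ y ∂ν) ≤ ∫ x, ∫ y, f x y ∂ν ∂μ ∧
      ∫ x, ∫ y, f x y ∂ν ∂μ ≤ (∫ x, g₂ x ∂μ) * (∫ y, h₂ y ∂ν) := by
  have hfint : Integrable (Function.uncurry f) (μ.prod ν) := by
    refine (hg₂.mul_prod hh₂).mono' hf ?_
    filter_upwards [h0, hl, hu] with z h0z hlz huz
    rw [Function.uncurry_def, norm_of_nonneg (h0z.trans hlz)]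
    exact huz
  rw [integral_integral hfint, ← integral_prod_mul, ← integral_prod_mul]
  exact ⟨integral_mono_ae (hg₁.mul_prod hh₁) hfint hl, integral_mono_ae hfint (hg₂.mul_prod hh₂) hu⟩

lemma intervalIntegral_mul_le_and_le {a b c d : ℝ} (hab : a ≤ b) (hcd : c ≤ d) {f : ℝ → ℝ → ℝ}
    (hf : Measurable (Function.uncurry f)) {g₁ g₂ h₁ h₂ : ℝ → ℝ}
    (hg₁ : IntervalIntegrable g₁ volume a b) (hh₁ : IntervalIntegrable h₁ volume c d)
    (hg₂ : IntervalIntegrable g₂ volume a b) (hh₂ : IntervalIntegrable h₂ volume c d)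
    (h0 : ∀ x ∈ Icc a b, ∀ y ∈ Icc c d, 0 ≤ g₁ x * h₁ y)
    (hl : ∀ x ∈ Icc a b, ∀ y ∈ Icc c d, g₁ x * h₁ y ≤ f x y)
    (hu : ∀ x ∈ Icc a b, ∀ y ∈ Icc c d, f x y ≤ g₂ x * h₂ y) :
    (∫ x in a..b, g₁ x) * (∫ y in c..d, h₁ y) ≤ ∫ x in a..b, ∫ y in c..d, f x y ∧
      ∫ x in a..b, ∫ y in c..d, f x y ≤ (∫ x in a..b, g₂ x) * (∫ y in c..d, h₂ y) := by
  have hae {P : ℝ → ℝ → Prop} (hP : ∀ x ∈ Icc a b, ∀ y ∈ Icc c d, P x y) :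
      ∀ᵐ z ∂(volume.restrict (Ioc a b)).prod (volume.restrict (Ioc c d)), P z.1 z.2 := by
    rw [Measure.prod_restrict]
    filter_upwards [ae_restrict_mem (measurableSet_Ioc.prod measurableSet_Ioc)] with z hz
    exact hP _ (Ioc_subset_Icc_self hz.1) _ (Ioc_subset_Icc_self hz.2)
  simp only [intervalIntegral.integral_of_le hab, intervalIntegral.integral_of_le hcd]
  exact integral_mul_integral_le_and_le hf.aestronglyMeasurable hg₁.1 hh₁.1 hg₂.1 hh₂.1
    (hae h0) (hae hl) (hae hu)

lemma min_one_mul_linearFractional_le {α β γ δ r u : ℝ} (hα : 0 ≤ α) (hβ : 0 ≤ β) (hγ : 0 ≤ γ)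
    (hδ : 0 < δ) (hdet : β * γ ≤ α * δ) (hr : 0 ≤ r) (hu : 0 ≤ u) :
    min 1 r * ((α * u + β) / (γ * u + δ)) ≤ (α * (r * u) + β) / (γ * (r * u) + δ) := by
  rcases le_total 1 r with h | h
  · rw [min_eq_left h, one_mul, div_le_div_iff₀ (by positivity) (by positivity), ← sub_nonneg]
    calc 0 ≤ (r - 1) * u * (α * δ - β * γ) :=
          mul_nonneg (mul_nonneg (sub_nonneg.2 h) hu) (sub_nonneg.2 hdet)
      _ = _ := by ring
  · rw [min_eq_right h, ← mul_div_assoc]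
    gcongr
    · nlinarith
    · exact mul_le_of_le_one_left hu h

lemma linearFractional_mul_le {α β γ δ r u : ℝ} (hα : 0 ≤ α) (hβ : 0 ≤ β) (hγ : 0 ≤ γ)
    (hδ : 0 < δ) (hdet : β * γ ≤ α * δ) (hr : 0 ≤ r) (hu : 0 ≤ u) :
    (α * (r * u) + β) / (γ * (r * u) + δ) ≤ (1 + r) * ((α * u + β) / (γ * u + δ)) := by
  rw [← mul_div_assoc, div_le_div_iff₀ (by positivity) (by positivity), ← sub_nonneg]
  calc 0 ≤ r * (1 + r) * β * γ * u + r * β * δ + r ^ 2 * α * γ * u ^ 2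
          + u * (α * δ - β * γ) := by
        have := sub_nonneg.2 hdet
        positivity
    _ = _ := by ring

section Factors

variable {p q a u v : ℝ}

/-- The factor carried to the power `k` when the Kummer integrals of the `A₂` kernel are replaced
by powers; here `p, q` are the simple roots at `λ`, `a` one of those at `X⁺`, and `u, v` the
rescaled variables of integration. -/
noncomputable def powFactor (p q a u v : ℝ) : ℝ :=
  (p * u + q) * (p + q * (1 - v)) / (1 + a * (p * u + q * (1 - v)))

/-- The factor carried to the first power, the normalized sum of the two rank-one terms. -/
noncomputable def linFactor (p q a u v : ℝ) : ℝ :=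
  u / (1 + a * (p * u + q * (1 - v))) + (1 - u) * (q * (1 - v) / (p + q * (1 - v)))

/-- `linFactor` at `v = 0` with the coefficient `1 - u` of the second term dropped. -/
noncomputable def linFactorBound (p q a u : ℝ) : ℝ := u / (1 + a * (p * u + q)) + q / (p + q)

lemma inv_le_one_add_mul_inv (hp : 0 < p) (hq : 0 < q) (ha : 0 ≤ a) (hu : 0 ≤ u)
    (hv : v ∈ Icc (0 : ℝ) 1) :
    (1 + a * (p * u + q * (1 - v)))⁻¹ ≤ (1 + a * q * v) * (1 + a * (p * u + q))⁻¹ := by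
  obtain ⟨hv0, hv1⟩ := hv
  have : 0 ≤ 1 - v := sub_nonneg.2 hv1
  rw [← div_eq_mul_inv, le_div_iff₀ (by positivity), inv_mul_le_iff₀ (by positivity), ← sub_nonneg]
  calc 0 ≤ a * q * v * (a * (p * u + q * (1 - v))) := by positivity
    _ = _ := by ring

lemma powFactor_le (hp : 0 < p) (hq : 0 < q) (ha : 0 ≤ a) (hu : 0 ≤ u) (hv : v ∈ Icc (0 : ℝ) 1) :
    powFactor p q a u v ≤ (1 + a * q * v) * powFactor p q a u 0 := by
  have hinv := inv_le_one_add_mul_inv hp hq ha hu hv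
  obtain ⟨hv0, hv1⟩ := hv
  have : 0 ≤ 1 - v := sub_nonneg.2 hv1
  unfold powFactor
  calc _ ≤ (p * u + q) * (p + q * 1) * ((1 + a * q * v) * (1 + a * (p * u + q))⁻¹) := by
        rw [div_eq_mul_inv]
        gcongr
        linarith
    _ = _ := by
      rw [sub_zero, mul_one]
      ring

lemma le_powFactor (hp : 0 < p) (hq : 0 < q) (ha : 0 ≤ a) (hu : 0 ≤ u) (hv : v ∈ Icc (0 : ℝ) 1) :
    (1 - v) * powFactor p q a u 0 ≤ powFactor p q a u v := by
  obtain ⟨hv0, hv1⟩ := hv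
  have : 0 ≤ 1 - v := sub_nonneg.2 hv1
  unfold powFactor
  rw [sub_zero, mul_one, ← mul_div_assoc, mul_left_comm]
  gcongr
  · nlinarith
  · nlinarith

lemma linFactor_le (hp : 0 < p) (hq : 0 < q) (ha : 0 ≤ a) (hu : 0 ≤ u) (hv : v ∈ Icc (0 : ℝ) 1) :
    linFactor p q a u v ≤ (1 + a * q * v) * linFactorBound p q a u := by
  have hinv := inv_le_one_add_mul_inv hp hq ha hu hv
  obtain ⟨hv0, hv1⟩ := hv
  have : 0 ≤ 1 - v := sub_nonneg.2 hv1
  have hratio : q * (1 - v) / (p + q * (1 - v)) ≤ q / (p + q) := by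
    rw [div_le_div_iff₀ (by positivity) (by positivity)]
    nlinarith [mul_pos hp hq]
  unfold linFactor linFactorBound
  rw [mul_add (1 + a * q * v)]
  refine add_le_add ?_ ?_
  · rw [div_eq_mul_inv, div_eq_mul_inv, mul_left_comm]
    gcongr
  · calc (1 - u) * (q * (1 - v) / (p + q * (1 - v))) ≤ 1 * (q * (1 - v) / (p + q * (1 - v))) := by
          gcongr
          linarith
      _ ≤ (1 + a * q * v) * (q / (p + q)) := by
          gcongr
          linarith [show 0 ≤ a * q * v by positivity]

lemma le_linFactor (hp : 0 < p) (hq : 0 < q) (ha : 0 ≤ a) (hu : u ∈ Icc (0 : ℝ) 1)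
    (hv : v ∈ Icc (0 : ℝ) 1) :
    (1 - u) * (1 - v) * linFactorBound p q a u ≤ linFactor p q a u v := by
  obtain ⟨hu0, hu1⟩ := hu
  obtain ⟨hv0, hv1⟩ := hv
  have : 0 ≤ 1 - u := sub_nonneg.2 hu1
  have hv1' : 0 ≤ 1 - v := sub_nonneg.2 hv1
  unfold linFactor linFactorBound
  rw [mul_add ((1 - u) * (1 - v))]
  refine add_le_add ?_ ?_
  · calc (1 - u) * (1 - v) * (u / (1 + a * (p * u + q))) ≤ 1 * (u / (1 + a * (p * u + q))) := by
          gcongr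
          exact mul_le_one₀ (by linarith) hv1' (by linarith)
      _ ≤ u / (1 + a * (p * u + q * (1 - v))) := by
          rw [one_mul]
          gcongr
          nlinarith
  · rw [mul_assoc, ← mul_div_assoc, mul_comm (1 - v)]
    gcongr
    nlinarith

lemma powFactor_zero_nonneg (hp : 0 < p) (hq : 0 < q) (ha : 0 ≤ a) (hu : 0 ≤ u) :
    0 ≤ powFactor p q a u 0 := by
  unfold powFactor
  rw [sub_zero, mul_one]
  positivity

lemma linFactorBound_nonneg (hp : 0 < p) (hq : 0 < q) (ha : 0 ≤ a) (hu : 0 ≤ u) :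
    0 ≤ linFactorBound p q a u := by
  unfold linFactorBound
  positivity

lemma powFactor_zero_scale {c : ℝ} (hp : 0 < p) (hq : 0 < q) (ha : 0 ≤ a) (hc : 0 ≤ c)
    (hu : 0 ≤ u) :
    min 1 ((1 + c) * u) * powFactor p q a (1 / (1 + c)) 0 ≤ powFactor p q a u 0 ∧
      powFactor p q a u 0 ≤ upperWeight c u * powFactor p q a (1 / (1 + c)) 0 := by
  have hform (t : ℝ) :
      powFactor p q a t 0 = (p + q) * ((p * t + q) / (a * p * t + (1 + a * q))) := by
    unfold powFactor
    ring
  have hdet : q * (a * p) ≤ p * (1 + a * q) := by linarith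
  have hu' : (1 + c) * u * (1 / (1 + c)) = u := by field_simp
  have hl := min_one_mul_linearFractional_le (r := (1 + c) * u) (u := 1 / (1 + c)) hp.le hq.le
    (by positivity) (by positivity) hdet (by positivity) (by positivity)
  have hu := linearFractional_mul_le (r := (1 + c) * u) (u := 1 / (1 + c)) hp.le hq.le
    (by positivity) (by positivity) hdet (by positivity) (by positivity)
  rw [hu'] at hl hu
  rw [hform, hform, upperWeight, mul_left_comm, mul_left_comm (1 + (1 + c) * u)]
  exact ⟨by gcongr, by gcongr⟩

lemma linFactorBound_scale {c : ℝ} (hp : 0 < p) (hq : 0 < q) (ha : 0 ≤ a) (hc : 0 ≤ c)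
    (hu : 0 ≤ u) :
    min 1 ((1 + c) * u) * linFactorBound p q a (1 / (1 + c)) ≤ linFactorBound p q a u ∧
      linFactorBound p q a u ≤ upperWeight c u * linFactorBound p q a (1 / (1 + c)) := by
  have hform (t : ℝ) :
      linFactorBound p q a t = (1 * t + 0) / (a * p * t + (1 + a * q)) + q / (p + q) := by
    unfold linFactorBound
    ring
  have hdet : 0 * (a * p) ≤ 1 * (1 + a * q) := by
    rw [zero_mul, one_mul]
    positivity
  have hu' : (1 + c) * u * (1 / (1 + c)) = u := by field_simp
  have hl := min_one_mul_linearFractional_le (r := (1 + c) * u) (u := 1 / (1 + c)) zero_le_one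
    le_rfl (by positivity) (by positivity) hdet (by positivity) (by positivity)
  have hu := linearFractional_mul_le (r := (1 + c) * u) (u := 1 / (1 + c)) zero_le_one
    le_rfl (by positivity) (by positivity) hdet (by positivity) (by positivity)
  rw [hu'] at hl hu
  have hr : 0 ≤ (1 + c) * u := by positivity
  have hconst : 0 ≤ q / (p + q) := by positivity
  rw [hform, hform, upperWeight, mul_add (min _ _), mul_add (1 + (1 + c) * u)]
  exact ⟨add_le_add hl (mul_le_of_le_one_left hconst (min_le_left _ _)),
    add_le_add hu (le_mul_of_one_le_left hconst (le_add_of_nonneg_right hr))⟩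

section Weighted

variable {c c' : ℝ}

lemma one_add_mul_le_upperWeight {d s : ℝ} (hd : d ≤ c) (hs : 0 ≤ s) :
    1 + d * s ≤ upperWeight c s := by
  unfold upperWeight
  gcongr
  linarith

lemma lowerWeight_le_one_sub {s : ℝ} (hs : s ≤ 1) : lowerWeight c s ≤ 1 - s :=
  mul_le_of_le_one_left (sub_nonneg.2 hs) (min_le_left _ _)

lemma lowerWeight_le_min {s : ℝ} (hc : 0 ≤ c) (hs : 0 ≤ s) :
    lowerWeight c s ≤ min 1 ((1 + c) * s) :=
  mul_le_of_le_one_right (le_min zero_le_one (by positivity)) (sub_le_self _ hs)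

lemma powFactor_le_upperWeight_mul (hp : 0 < p) (hq : 0 < q) (ha : 0 ≤ a) (hc : 0 ≤ c)
    (hc' : a * q ≤ c') (hu : 0 ≤ u) (hv : v ∈ Icc (0 : ℝ) 1) :
    powFactor p q a u v
      ≤ upperWeight c' v * upperWeight c u * powFactor p q a (1 / (1 + c)) 0 := by
  have haqv : 0 ≤ 1 + a * q * v := by
    have := hv.1
    positivity
  have hnonneg := haqv.trans (one_add_mul_le_upperWeight hc' hv.1)
  calc powFactor p q a u v ≤ (1 + a * q * v) * powFactor p q a u 0 := powFactor_le hp hq ha hu hv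
    _ ≤ upperWeight c' v * (upperWeight c u * powFactor p q a (1 / (1 + c)) 0) :=
      mul_le_mul (one_add_mul_le_upperWeight hc' hv.1) (powFactor_zero_scale hp hq ha hc hu).2
        (powFactor_zero_nonneg hp hq ha hu) hnonneg
    _ = _ := (mul_assoc _ _ _).symm

lemma linFactor_le_upperWeight_mul (hp : 0 < p) (hq : 0 < q) (ha : 0 ≤ a) (hc : 0 ≤ c)
    (hc' : a * q ≤ c') (hu : 0 ≤ u) (hv : v ∈ Icc (0 : ℝ) 1) :
    linFactor p q a u v
      ≤ upperWeight c' v * upperWeight c u * linFactorBound p q a (1 / (1 + c)) := by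
  have haqv : 0 ≤ 1 + a * q * v := by
    have := hv.1
    positivity
  have hnonneg := haqv.trans (one_add_mul_le_upperWeight hc' hv.1)
  calc linFactor p q a u v ≤ (1 + a * q * v) * linFactorBound p q a u :=
        linFactor_le hp hq ha hu hv
    _ ≤ upperWeight c' v * (upperWeight c u * linFactorBound p q a (1 / (1 + c))) :=
      mul_le_mul (one_add_mul_le_upperWeight hc' hv.1) (linFactorBound_scale hp hq ha hc hu).2
        (linFactorBound_nonneg hp hq ha hu) hnonneg
    _ = _ := (mul_assoc _ _ _).symm

lemma lowerWeight_mul_le_powFactor (hp : 0 < p) (hq : 0 < q) (ha : 0 ≤ a) (hc : 0 ≤ c)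
    (hu : u ∈ Icc (0 : ℝ) 1) (hv : v ∈ Icc (0 : ℝ) 1) :
    lowerWeight c' v * lowerWeight c u * powFactor p q a (1 / (1 + c)) 0
      ≤ powFactor p q a u v := by
  have hF : 0 ≤ powFactor p q a (1 / (1 + c)) 0 := powFactor_zero_nonneg hp hq ha (by positivity)
  have hv1 : 0 ≤ 1 - v := sub_nonneg.2 hv.2
  calc lowerWeight c' v * lowerWeight c u * powFactor p q a (1 / (1 + c)) 0
      ≤ (1 - v) * min 1 ((1 + c) * u) * powFactor p q a (1 / (1 + c)) 0 := by
        gcongr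
        · exact lowerWeight_nonneg hc hu
        · exact lowerWeight_le_one_sub hv.2
        · exact lowerWeight_le_min hc hu.1
    _ ≤ (1 - v) * powFactor p q a u 0 := by
        rw [mul_assoc]
        gcongr
        exact (powFactor_zero_scale hp hq ha hc hu.1).1
    _ ≤ powFactor p q a u v := le_powFactor hp hq ha hu.1 hv

lemma lowerWeight_mul_le_linFactor (hp : 0 < p) (hq : 0 < q) (ha : 0 ≤ a) (hc : 0 ≤ c)
    (hu : u ∈ Icc (0 : ℝ) 1) (hv : v ∈ Icc (0 : ℝ) 1) :
    lowerWeight c' v * lowerWeight c u * linFactorBound p q a (1 / (1 + c))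
      ≤ linFactor p q a u v := by
  have hF : 0 ≤ linFactorBound p q a (1 / (1 + c)) :=
    linFactorBound_nonneg hp hq ha (by positivity)
  have hu1 : 0 ≤ 1 - u := sub_nonneg.2 hu.2
  have hv1 : 0 ≤ 1 - v := sub_nonneg.2 hv.2
  calc lowerWeight c' v * lowerWeight c u * linFactorBound p q a (1 / (1 + c))
      ≤ (1 - v) * lowerWeight c u * linFactorBound p q a (1 / (1 + c)) := by
        gcongr
        · exact lowerWeight_nonneg hc hu
        · exact lowerWeight_le_one_sub hv.2
    _ = (1 - u) * (1 - v) * (min 1 ((1 + c) * u) * linFactorBound p q a (1 / (1 + c))) := by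
        unfold lowerWeight
        ring
    _ ≤ (1 - u) * (1 - v) * linFactorBound p q a u := by
        gcongr
        exact (linFactorBound_scale hp hq ha hc hu.1).1
    _ ≤ linFactor p q a u v := le_linFactor hp hq ha hu hv

end Weighted

section Peak

variable {b : ℝ}

lemma comparable_powFactor (hp : 0 < p) (hq : 0 < q) (ha : 0 ≤ a) (hb : 0 ≤ b) :
    Comparable 4 (powFactor p q a (1 / (1 + p * b)) 0)
      ((p + q) ^ 2 * (1 + q * (a + b)) / ((1 + q * a) * (1 + (p + q) * (a + b)))) := by
  have hform : powFactor p q a (1 / (1 + p * b)) 0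
      = (p + q) * (p + q + p * q * b) / (1 + p * b + a * (p + q + p * q * b)) := by
    unfold powFactor
    field_simp
    ring
  rw [hform]
  constructor
  · rw [inv_mul_eq_div, div_div, div_le_div_iff₀ (by positivity) (by positivity), ← sub_nonneg]
    ring_nf
    positivity
  · rw [← mul_div_assoc, div_le_div_iff₀ (by positivity) (by positivity), ← sub_nonneg]
    ring_nf
    positivity

lemma comparable_linFactorBound (hp : 0 < p) (hq : 0 < q) (ha : 0 ≤ a) (hb : 0 ≤ b) :
    Comparable 4 (linFactorBound p q a (1 / (1 + p * b)))
      ((1 + q * (a + b)) / (1 + (p + q) * (a + b))) := by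
  have hform : linFactorBound p q a (1 / (1 + p * b))
      = 1 / (1 + p * b + a * (p + q + p * q * b)) + q / (p + q) := by
    unfold linFactorBound
    field_simp
    ring
  rw [hform, div_add_div _ _ (by positivity) (by positivity)]
  constructor
  · rw [inv_mul_eq_div, div_div, div_le_div_iff₀ (by positivity) (by positivity), ← sub_nonneg]
    ring_nf
    positivity
  · rw [← mul_div_assoc, div_le_div_iff₀ (by positivity) (by positivity), ← sub_nonneg]
    ring_nf
    positivity

end Peak

end Factors

section Laplace

variable {A B A' B' N D : ℝ}

lemma integral_kummerDensity_mul_le_and_le {c c' F : ℝ} {f : ℝ → ℝ → ℝ} (hA : 0 < A) (hB : 0 < B)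
    (hA' : 0 < A') (hB' : 0 < B') (hN : 0 ≤ N) (hD : 0 < D) (hc : 0 ≤ c) (hc' : 0 ≤ c')
    (hF : 0 ≤ F) (hf : Measurable (Function.uncurry f))
    (hfl : ∀ v ∈ Icc (0 : ℝ) 1, ∀ u ∈ Icc (0 : ℝ) 1,
      D⁻¹ * ((lowerWeight c v * lowerWeight c' u) ^ N * F) ≤ f v u)
    (hfu : ∀ v ∈ Icc (0 : ℝ) 1, ∀ u ∈ Icc (0 : ℝ) 1,
      f v u ≤ D * ((upperWeight c v * upperWeight c' u) ^ N * F)) :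
    D⁻¹ * F * (∫ v in (0 : ℝ)..1, lowerWeight c v ^ N * kummerDensity A B c v)
          * (∫ u in (0 : ℝ)..1, lowerWeight c' u ^ N * kummerDensity A' B' c' u)
        ≤ ∫ v in (0 : ℝ)..1, ∫ u in (0 : ℝ)..1,
          kummerDensity A B c v * kummerDensity A' B' c' u * f v u ∧
      ∫ v in (0 : ℝ)..1, ∫ u in (0 : ℝ)..1,
          kummerDensity A B c v * kummerDensity A' B' c' u * f v u
        ≤ D * F * (∫ v in (0 : ℝ)..1, upperWeight c v ^ N * kummerDensity A B c v)
          * (∫ u in (0 : ℝ)..1, upperWeight c' u ^ N * kummerDensity A' B' c' u) := by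
  have hsplit {x y : ℝ} (w z C : ℝ) (hx : 0 ≤ x) (hy : 0 ≤ y) :
      (C * F * (x ^ N * w)) * (y ^ N * z) = w * z * (C * ((x * y) ^ N * F)) := by
    rw [mul_rpow hx hy]
    ring
  have hdens {v u : ℝ} (hv : v ∈ Icc (0 : ℝ) 1) (hu : u ∈ Icc (0 : ℝ) 1) :
      0 ≤ kummerDensity A B c v * kummerDensity A' B' c' u :=
    mul_nonneg (kummerDensity_nonneg A B c hv) (kummerDensity_nonneg A' B' c' hu)
  have hmeas : Measurable (Function.uncurry fun v u ↦
      kummerDensity A B c v * kummerDensity A' B' c' u * f v u) := by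
    simp only [Function.uncurry_def] at hf ⊢
    unfold kummerDensity
    fun_prop
  rw [← intervalIntegral.integral_const_mul (D⁻¹ * F),
    ← intervalIntegral.integral_const_mul (D * F)]
  refine intervalIntegral_mul_le_and_le zero_le_one zero_le_one hmeas
    ((intervalIntegrable_lowerWeight hA hB hN c).const_mul _)
    (intervalIntegrable_lowerWeight hA' hB' hN c')
    ((intervalIntegrable_upperWeight hA hB hN c).const_mul _)
    (intervalIntegrable_upperWeight hA' hB' hN c')
    (fun v hv u hu ↦ ?_) (fun v hv u hu ↦ ?_) (fun v hv u hu ↦ ?_)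
  · have h := lowerWeight_nonneg hc hv
    have h' := lowerWeight_nonneg hc' hu
    rw [hsplit _ _ _ h h']
    exact mul_nonneg (hdens hv hu) (by positivity)
  · rw [hsplit _ _ _ (lowerWeight_nonneg hc hv) (lowerWeight_nonneg hc' hu)]
    exact mul_le_mul_of_nonneg_left (hfl v hv u hu) (hdens hv hu)
  · rw [hsplit _ _ _ (upperWeight_nonneg hc hv.1) (upperWeight_nonneg hc' hu.1)]
    exact mul_le_mul_of_nonneg_left (hfu v hv u hu) (hdens hv hu)

/-- Laplace's method in two variables, with constants uniform in the rates `c` and `c'`. -/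
lemma exists_comparable_integral_kummerDensity (hA : 0 < A) (hB : 0 < B) (hA' : 0 < A')
    (hB' : 0 < B') (hN : 0 ≤ N) (hD : 0 < D) :
    ∃ C > 0, ∀ c c' F : ℝ, 0 ≤ c → 0 ≤ c' → 0 ≤ F →
      ∀ f : ℝ → ℝ → ℝ, Measurable (Function.uncurry f) →
      (∀ v ∈ Icc (0 : ℝ) 1, ∀ u ∈ Icc (0 : ℝ) 1,
        D⁻¹ * ((lowerWeight c v * lowerWeight c' u) ^ N * F) ≤ f v u) →
      (∀ v ∈ Icc (0 : ℝ) 1, ∀ u ∈ Icc (0 : ℝ) 1,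
        f v u ≤ D * ((upperWeight c v * upperWeight c' u) ^ N * F)) →
      Comparable C
        (∫ v in (0 : ℝ)..1, ∫ u in (0 : ℝ)..1,
          kummerDensity A B c v * kummerDensity A' B' c' u * f v u)
        (F * ((1 + c) ^ (-A) * (1 + c') ^ (-A'))) := by
  obtain ⟨m, hm, hl⟩ := exists_le_integral_lowerWeight hA hB hN
  obtain ⟨m', hm', hl'⟩ := exists_le_integral_lowerWeight hA' hB' hN
  obtain ⟨M, hM, hu⟩ := exists_integral_upperWeight_le hA hB hN
  obtain ⟨M', hM', hu'⟩ := exists_integral_upperWeight_le hA' hB' hN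
  refine ⟨D * M * M' + (D⁻¹ * m * m')⁻¹, by positivity, fun c c' F hc hc' hF f hf hfl hfu ↦ ?_⟩
  obtain ⟨hlow, hupp⟩ :=
    integral_kummerDensity_mul_le_and_le hA hB hA' hB' hN hD hc hc' hF hf hfl hfu
  have hlow_nonneg : 0 ≤ ∫ v in (0 : ℝ)..1, lowerWeight c v ^ N * kummerDensity A B c v :=
    le_trans (by positivity) (hl c hc)
  have hupp_nonneg : 0 ≤ ∫ u in (0 : ℝ)..1, upperWeight c' u ^ N * kummerDensity A' B' c' u :=
    intervalIntegral.integral_nonneg zero_le_one fun u hu ↦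
      mul_nonneg (rpow_nonneg (upperWeight_nonneg hc' hu.1) _) (kummerDensity_nonneg A' B' c' hu)
  refine .of_bounds (by positivity) (by positivity) (by positivity) (le_trans ?_ hlow)
    (hupp.trans ?_)
  · calc D⁻¹ * m * m' * (F * ((1 + c) ^ (-A) * (1 + c') ^ (-A')))
        = D⁻¹ * F * (m * (1 + c) ^ (-A)) * (m' * (1 + c') ^ (-A')) := by ring
      _ ≤ _ := by
        gcongr
        exacts [hl c hc, hl' c' hc']
  · calc _ ≤ D * F * (M * (1 + c) ^ (-A)) * (M' * (1 + c') ^ (-A')) := by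
          gcongr
          exacts [hu c hc, hu' c' hc']
      _ = _ := by ring

end Laplace

/-- What is left of the rescaled integrand of the `A₂` kernel once the two Kummer densities and
the exponential are split off; the rank-one kernels appear as Kummer integrals. -/
noncomputable def kernelCore (k p q a v u : ℝ) : ℝ :=
  ((p * u + q) * (p + q * (1 - v))) ^ k
    * (u * kummerIntegral (k + 1) k (a * (p * u + q * (1 - v)))
      + (1 - u) * (q * (1 - v) / (p + q * (1 - v)))
        * kummerIntegral k (k + 1) (a * (p * u + q * (1 - v))))

section Core

variable {k : ℝ}

lemma measurable_kernelCore (k p q a : ℝ) : Measurable (Function.uncurry (kernelCore k p q a)) := by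
  have h₁ := measurable_kummerIntegral (k + 1) k
  have h₂ := measurable_kummerIntegral k (k + 1)
  simp only [Function.uncurry_def, kernelCore]
  fun_prop

lemma exists_comparable_kernelCore (hk : 0 < k) :
    ∃ C > 0, ∀ p q a v u : ℝ, 0 < p → 0 < q → 0 ≤ a → v ∈ Icc (0 : ℝ) 1 → u ∈ Icc (0 : ℝ) 1 →
      Comparable C (kernelCore k p q a v u) (powFactor p q a u v ^ k * linFactor p q a u v) := by
  have hk1 : 0 < k + 1 := by positivity
  obtain ⟨C₁, hC₁, h₁⟩ := exists_comparable_kummerIntegral hk1 hk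
  obtain ⟨C₂, hC₂, h₂⟩ := exists_comparable_kummerIntegral hk hk1
  refine ⟨C₁ + C₂, by positivity, fun p q a v u hp hq ha ⟨_, hv1⟩ ⟨hu0, hu1⟩ ↦ ?_⟩
  have : 0 ≤ 1 - u := sub_nonneg.2 hu1
  have : 0 ≤ 1 - v := sub_nonneg.2 hv1
  have hd : 0 ≤ a * (p * u + q * (1 - v)) := by positivity
  have hsum := (((h₁ _ hd).mono hC₁ (le_add_of_nonneg_right hC₂.le) (by positivity)).mul_left
    hu0).add (((h₂ _ hd).mono hC₂ (le_add_of_nonneg_left hC₁.le) (by positivity)).mul_left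
      (z := (1 - u) * (q * (1 - v) / (p + q * (1 - v)))) (by positivity))
  have hform : powFactor p q a u v ^ k * linFactor p q a u v
      = ((p * u + q) * (p + q * (1 - v))) ^ k
        * (u * (1 + a * (p * u + q * (1 - v))) ^ (-(k + 1))
          + (1 - u) * (q * (1 - v) / (p + q * (1 - v)))
            * (1 + a * (p * u + q * (1 - v))) ^ (-k)) := by
    have hD : 0 < 1 + a * (p * u + q * (1 - v)) := by positivity
    unfold powFactor linFactor
    rw [div_rpow (by positivity) hD.le, neg_add', rpow_sub_one hD.ne', rpow_neg hD.le]
    field_simp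
  rw [hform]
  exact hsum.mul_left (by positivity)

lemma powFactor_nonneg {p q a u v : ℝ} (hp : 0 < p) (hq : 0 < q) (ha : 0 ≤ a)
    (hu : u ∈ Icc (0 : ℝ) 1) (hv : v ∈ Icc (0 : ℝ) 1) : 0 ≤ powFactor p q a u v :=
  have := hu.1
  have : 0 ≤ 1 - v := sub_nonneg.2 hv.2
  by unfold powFactor; positivity

lemma exists_weight_bounds_kernelCore (hk : 0 < k) :
    ∃ D > 0, ∀ p q a c c' v u : ℝ, 0 < p → 0 < q → 0 ≤ a → 0 ≤ c → a * q ≤ c' →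
      v ∈ Icc (0 : ℝ) 1 → u ∈ Icc (0 : ℝ) 1 →
      D⁻¹ * ((lowerWeight c' v * lowerWeight c u) ^ (k + 1)
        * (powFactor p q a (1 / (1 + c)) 0 ^ k * linFactorBound p q a (1 / (1 + c))))
          ≤ kernelCore k p q a v u ∧
      kernelCore k p q a v u ≤ D * ((upperWeight c' v * upperWeight c u) ^ (k + 1)
        * (powFactor p q a (1 / (1 + c)) 0 ^ k * linFactorBound p q a (1 / (1 + c)))) := by
  obtain ⟨D, hD, hcore⟩ := exists_comparable_kernelCore hk
  refine ⟨D, hD, fun p q a c c' v u hp hq ha hc hc' hv hu ↦ ?_⟩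
  have hsplit {w x y : ℝ} (hw : 0 ≤ w) (hx : 0 ≤ x) :
      w ^ (k + 1) * (x ^ k * y) = (w * x) ^ k * (w * y) := by
    rw [mul_rpow hw hx, rpow_add_one' hw (by positivity)]
    ring
  have hc'0 : 0 ≤ c' := le_trans (by positivity) hc'
  have hu0 : 0 ≤ 1 / (1 + c) := by positivity
  have hP := powFactor_zero_nonneg hp hq ha hu0
  have hL := linFactorBound_nonneg hp hq ha hu0
  have hlw := mul_nonneg (lowerWeight_nonneg hc'0 hv) (lowerWeight_nonneg hc hu)
  have huw := mul_nonneg (upperWeight_nonneg hc'0 hv.1) (upperWeight_nonneg hc hu.1)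
  have hpow := powFactor_nonneg hp hq ha hu hv
  obtain ⟨hl, hu'⟩ := hcore p q a v u hp hq ha hv hu
  constructor
  · refine le_trans ?_ hl
    rw [hsplit hlw hP]
    gcongr
    exacts [lowerWeight_mul_le_powFactor hp hq ha hc hu hv,
      lowerWeight_mul_le_linFactor hp hq ha hc hu hv]
  · refine hu'.trans ?_
    rw [hsplit huw hP]
    have hlin := (mul_nonneg hlw hL).trans (lowerWeight_mul_le_linFactor hp hq ha hc hu hv)
    gcongr
    exacts [powFactor_le_upperWeight_mul hp hq ha hc hc' hu.1 hv,
      linFactor_le_upperWeight_mul hp hq ha hc hc' hu.1 hv]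

lemma comparable_peak {p q a b : ℝ} (hk : 0 < k) (hp : 0 < p) (hq : 0 < q) (ha : 0 ≤ a)
    (hb : 0 ≤ b) :
    Comparable (4 ^ k * 4)
      ((1 + q * (a + b)) ^ (-(k + 1)) * (1 + p * b) ^ (-k)
        * (powFactor p q a (1 / (1 + p * b)) 0 ^ k * linFactorBound p q a (1 / (1 + p * b))))
      ((p + q) ^ (2 * k)
        / ((1 + p * b) ^ k * (1 + q * a) ^ k * (1 + (p + q) * (a + b)) ^ (k + 1))) := by
  have hpeak := ((comparable_powFactor hp hq ha hb).rpow four_pos (by positivity) hk.le).mul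
    (comparable_linFactorBound hp hq ha hb) (by positivity) four_pos (by positivity)
    (by positivity)
  convert hpeak.mul_left (z := (1 + q * (a + b)) ^ (-(k + 1)) * (1 + p * b) ^ (-k))
    (by positivity) using 1
  have h₁ : 0 < 1 + q * (a + b) := by positivity
  have h₂ : 0 < 1 + (p + q) * (a + b) := by positivity
  have hpq : ((p + q) ^ 2) ^ k = (p + q) ^ (2 * k) := by
    rw [rpow_mul (by positivity), rpow_two]
  rw [div_rpow (by positivity) (by positivity), mul_rpow (by positivity) h₁.le,
    mul_rpow (by positivity) h₂.le, hpq, rpow_add_one h₂.ne', neg_add', rpow_sub_one h₁.ne',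
    rpow_neg h₁.le, rpow_neg (by positivity)]
  field_simp

lemma exists_comparable_integral_kernelCore (hk : 0 < k) :
    ∃ C > 0, ∀ p q a b : ℝ, 0 < p → 0 < q → 0 ≤ a → 0 ≤ b →
      Comparable C
        (∫ v in (0 : ℝ)..1, ∫ u in (0 : ℝ)..1,
          kummerDensity (k + 1) k (q * (a + b)) v * kummerDensity k k (p * b) u
            * kernelCore k p q a v u)
        ((p + q) ^ (2 * k)
          / ((1 + p * b) ^ k * (1 + q * a) ^ k * (1 + (p + q) * (a + b)) ^ (k + 1))) := by
  have hk1 : 0 < k + 1 := by positivity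
  obtain ⟨D, hD, hcore⟩ := exists_weight_bounds_kernelCore hk
  obtain ⟨C, hC, hint⟩ := exists_comparable_integral_kummerDensity hk1 hk hk hk hk1.le hD
  refine ⟨C * (4 ^ k * 4), by positivity, fun p q a b hp hq ha hb ↦ ?_⟩
  have hu0 : 0 ≤ 1 / (1 + p * b) := by positivity
  have hP := powFactor_zero_nonneg hp hq ha hu0
  have hL := linFactorBound_nonneg hp hq ha hu0
  have hbounds (v : ℝ) (hv : v ∈ Icc (0 : ℝ) 1) (u : ℝ) (hu : u ∈ Icc (0 : ℝ) 1) :=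
    hcore p q a (p * b) (q * (a + b)) v u hp hq ha (by positivity) (by nlinarith) hv hu
  have hlaplace := hint (q * (a + b)) (p * b) _ (by positivity) (by positivity) (by positivity) _
    (measurable_kernelCore k p q a) (fun v hv u hu ↦ (hbounds v hv u hu).1)
    fun v hv u hu ↦ (hbounds v hv u hu).2
  rw [mul_comm (powFactor p q a (1 / (1 + p * b)) 0 ^ k * _)] at hlaplace
  exact hlaplace.trans (comparable_peak hk hp hq ha hb) hC

end Core

section Reduction

variable {k : ℝ}

lemma two_mul_Gamma_two_mul_div_sq (hk : 0 < k) :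
    2 * Gamma (2 * k) / Gamma k ^ 2 = Gamma (k + 1 / 2) / (√π * Gamma k) * 2 ^ (2 * k) := by
  have hΓ := (Gamma_pos_of_pos hk).ne'
  have h2 : (2 : ℝ) ^ (1 - 2 * k) * 2 ^ (2 * k) = 2 := by
    rw [← rpow_add two_pos, sub_add_cancel, rpow_one]
  have hπ : √π ≠ 0 := by positivity
  have hdup := Gamma_mul_Gamma_add_half k
  generalize Gamma (k + 1 / 2) = G at hdup ⊢
  field_simp
  linear_combination (-2 ^ (2 * k)) * hdup - Gamma (2 * k) * √π * h2

lemma Erk1_eq_kummerIntegral (hk : 0 < k) (x v : ℝ) :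
    Erk1 k x v
      = 2 * Gamma (2 * k) / Gamma k ^ 2 * (exp (x * v) * kummerIntegral k (k + 1) (2 * x * v)) := by
  have hsubst := intervalIntegral.mul_integral_comp_sub_mul (a := 0) (b := 1)
    (f := fun z ↦ exp (z * x * v) * (1 - z) ^ (k - 1) * (1 + z) ^ k) 2 1
  have hrange : (1 : ℝ) - 2 * 1 = -1 ∧ (1 : ℝ) - 2 * 0 = 1 := by norm_num
  rw [hrange.1, hrange.2] at hsubst
  rw [Erk1, ← hsubst, two_mul_Gamma_two_mul_div_sq hk, mul_assoc (_ / _)]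
  congr 1
  simp only [kummerIntegral, ← intervalIntegral.integral_const_mul]
  refine intervalIntegral.integral_congr fun s hs ↦ ?_
  rw [uIcc_of_le zero_le_one] at hs
  have hleft : (1 - (1 - 2 * s)) ^ (k - 1) = 2 ^ k / 2 * s ^ (k - 1) := by
    rw [sub_sub_cancel, mul_rpow two_pos.le hs.1, rpow_sub_one two_ne_zero]
  have hright : (1 + (1 - 2 * s)) ^ k = 2 ^ k * (1 - s) ^ k := by
    rw [← mul_rpow two_pos.le (sub_nonneg.2 hs.2)]
    ring_nf
  have hexp : exp ((1 - 2 * s) * x * v) = exp (x * v) * exp (-(2 * x * v * s)) := by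
    rw [← exp_add]
    ring_nf
  have htwo : (2 : ℝ) ^ (2 * k) = 2 ^ k * 2 ^ k := by
    rw [two_mul, rpow_add two_pos]
  simp only [kummerDensity, hleft, hright, hexp, htwo, add_sub_cancel_right]
  ring

lemma Erk1_neg_eq_kummerIntegral (hk : 0 < k) (x v : ℝ) :
    Erk1 k (-x) v
      = 2 * Gamma (2 * k) / Gamma k ^ 2
        * (exp (x * v) * kummerIntegral (k + 1) k (2 * x * v)) := by
  rw [Erk1_eq_kummerIntegral hk, kummerIntegral_reflect, ← mul_assoc (exp _), ← exp_add]
  ring_nf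

lemma integral_integral_eq_integral_unit (f : ℝ → ℝ → ℝ) (a b p q : ℝ) :
    ∫ y in a..(a + q), ∫ x in b..(b + p), f y x
      = p * q * ∫ v in (0 : ℝ)..1, ∫ u in (0 : ℝ)..1, f (a + q * v) (b + p * u) := by
  have hunit (g : ℝ → ℝ) (c d : ℝ) :
      ∫ x in c..(c + d), g x = d * ∫ t in (0 : ℝ)..1, g (c + d * t) := by
    rw [intervalIntegral.mul_integral_comp_add_mul, mul_zero, mul_one, add_zero]
  simp only [hunit, intervalIntegral.integral_const_mul]
  ring

lemma rpow_eq_mul_rpow_sub_one {x : ℝ} (hk : 0 < k) (hx : 0 ≤ x) : x ^ k = x * x ^ (k - 1) := by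
  rw [mul_comm, ← rpow_add_one' hx (by simpa using hk.ne'), sub_add_cancel]

lemma Wk_affine {p q u v : ℝ} (l : ℝ) (hp : 0 ≤ p) (hq : 0 ≤ q) (hu : u ∈ Icc (0 : ℝ) 1)
    (hv : v ∈ Icc (0 : ℝ) 1) :
    Wk k (l + q + p) (l + q) l (l + q + p * u) (l + q * v)
      = ((p * q) ^ (k - 1)) ^ 2 * (u ^ (k - 1) * (1 - u) ^ (k - 1))
        * (v ^ (k - 1) * (1 - v) ^ (k - 1)) * ((p * u + q) * (p + q * (1 - v))) ^ (k - 1) := by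
  have hu0 := hu.1
  have hv0 := hv.1
  have hu1 := sub_nonneg.2 hu.2
  have hv1 := sub_nonneg.2 hv.2
  have hnodes : (l + q + p - (l + q + p * u)) * (l + q + p - (l + q * v))
        * (l + q + p * u - (l + q)) * (l + q - (l + q * v)) * (l + q + p * u - l)
        * (l + q * v - l)
      = p * q * (p * q) * (u * (1 - u)) * (v * (1 - v)) * ((p * u + q) * (p + q * (1 - v))) := by
    ring
  rw [Wk, hnodes, mul_rpow (by positivity) (by positivity), mul_rpow (by positivity)
    (by positivity), mul_rpow (by positivity) (by positivity), mul_rpow (x := p * q)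
    (by positivity) (by positivity), mul_rpow hu0 hu1, mul_rpow hv0 hv1, sq]

lemma exp_half_mul_exp (l p q a b x u v : ℝ) :
    exp (a / 2 * (l + q + p * u - (l + q * v)))
        * exp ((x + (x + a) - 2 * (x + a + b)) * (l + q + p * u + (l + q * v)) / 2)
      = exp (-(b * (l + q) + (a + b) * l))
        * (exp (-(q * (a + b) * v)) * exp (-(p * b * u))) := by
  simp only [← exp_add]
  ring_nf

lemma rankOne_bracket_affine {p q v : ℝ} (l x a u : ℝ) (hk : 0 < k)
    (hd : p + q * (1 - v) ≠ 0) :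
    (l + q + p * u - (l + q)) * (l + q + p - (l + q * v))
          * Erk1 k ((x - (x + a)) / 2) (l + q + p * u - (l + q * v))
        + (l + q + p - (l + q + p * u)) * (l + q - (l + q * v))
          * Erk1 k (-(x - (x + a)) / 2) (l + q + p * u - (l + q * v))
      = 2 * Gamma (2 * k) / Gamma k ^ 2 * exp (a / 2 * (l + q + p * u - (l + q * v)))
        * (p * (p + q * (1 - v)))
        * (u * kummerIntegral (k + 1) k (a * (p * u + q * (1 - v)))
          + (1 - u) * (q * (1 - v) / (p + q * (1 - v)))
            * kummerIntegral k (k + 1) (a * (p * u + q * (1 - v)))) := by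
  have hneg : (x - (x + a)) / 2 = -(a / 2) := by ring
  have hpos : -(x - (x + a)) / 2 = a / 2 := by ring
  have hrate : 2 * (a / 2) * (l + q + p * u - (l + q * v)) = a * (p * u + q * (1 - v)) := by ring
  rw [hneg, hpos, Erk1_neg_eq_kummerIntegral hk, Erk1_eq_kummerIntegral hk, hrate]
  field_simp
  ring

lemma EkA2_integrand_affine {p q u v : ℝ} (l x a b : ℝ) (hk : 0 < k) (hp : 0 < p) (hq : 0 < q)
    (hu : u ∈ Icc (0 : ℝ) 1) (hv : v ∈ Icc (0 : ℝ) 1) :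
    ((l + q + p * u - (l + q)) * (l + q + p - (l + q * v))
          * Erk1 k ((x - (x + a)) / 2) (l + q + p * u - (l + q * v))
        + (l + q + p - (l + q + p * u)) * (l + q - (l + q * v))
          * Erk1 k (-(x - (x + a)) / 2) (l + q + p * u - (l + q * v)))
        * ((l + q + p * u - l) * (l + q * v - l))
        * exp ((x + (x + a) - 2 * (x + a + b)) * (l + q + p * u + (l + q * v)) / 2)
        * Wk k (l + q + p) (l + q) l (l + q + p * u) (l + q * v)
      = 2 * Gamma (2 * k) / Gamma k ^ 2 * (p * q * ((p * q) ^ (k - 1)) ^ 2)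
        * exp (-(b * (l + q) + (a + b) * l))
        * (kummerDensity (k + 1) k (q * (a + b)) v * kummerDensity k k (p * b) u
          * kernelCore k p q a v u) := by
  have hv0 := hv.1
  have hv1 := sub_nonneg.2 hv.2
  have hu0 := hu.1
  rw [rankOne_bracket_affine l x a u hk (by positivity), Wk_affine l hp.le hq.le hu hv, kernelCore,
    kummerDensity, kummerDensity, add_sub_cancel_right, rpow_eq_mul_rpow_sub_one hk hv0,
    rpow_eq_mul_rpow_sub_one hk (x := (p * u + q) * (p + q * (1 - v))) (by positivity)]
  have hexp := exp_half_mul_exp l p q a b x u v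
  generalize u * kummerIntegral (k + 1) k _ + _ = S
  generalize ((p * u + q) * (p + q * (1 - v))) ^ (k - 1) = W
  linear_combination 2 * Gamma (2 * k) / Gamma k ^ 2 * (p * (p + q * (1 - v))) * S
    * ((p * u + q) * (q * v)) * (((p * q) ^ (k - 1)) ^ 2 * (u ^ (k - 1) * (1 - u) ^ (k - 1))
    * (v ^ (k - 1) * (1 - v) ^ (k - 1)) * W) * hexp

lemma EkA2_affine_eq {p q : ℝ} (l x a b : ℝ) (hk : 0 < k) (hp : 0 < p) (hq : 0 < q) :
    EkA2 k x (x + a) (x + a + b) (l + q + p) (l + q) l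
      = 6 * Gamma (3 * k) * Gamma (2 * k) / Gamma k ^ 4
        * (exp (-(b * (l + q) + (a + b) * l)) * ((p + q) ^ (2 * k))⁻¹
          * ∫ v in (0 : ℝ)..1, ∫ u in (0 : ℝ)..1,
            kummerDensity (k + 1) k (q * (a + b)) v * kummerDensity k k (p * b) u
              * kernelCore k p q a v u) := by
  have hV : Vlam (l + q + p) (l + q) l ^ (2 * k)
      = (p * q) ^ 2 * ((p * q) ^ (k - 1)) ^ 2 * (p + q) ^ (2 * k) := by
    have hVlam : Vlam (l + q + p) (l + q) l = p * q * (p + q) := by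
      rw [Vlam]
      ring
    rw [hVlam, mul_rpow (by positivity) (by positivity), ← mul_pow,
      ← rpow_eq_mul_rpow_sub_one hk (by positivity), mul_comm 2 k, rpow_mul (by positivity),
      rpow_two]
  rw [EkA2, integral_integral_eq_integral_unit, hV]
  have hint := intervalIntegral.integral_congr (μ := volume) (a := 0) (b := 1) fun v hv ↦
    intervalIntegral.integral_congr (μ := volume) (a := 0) (b := 1) fun u hu ↦
      EkA2_integrand_affine l x a b hk hp hq (by rwa [uIcc_of_le zero_le_one] at hu)
        (by rwa [uIcc_of_le zero_le_one] at hv)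
  simp only [intervalIntegral.integral_const_mul] at hint
  rw [hint]
  have hΓ := (Gamma_pos_of_pos hk).ne'
  field_simp
  ring

lemma exists_comparable_EkA2_affine (hk : 0 < k) :
    ∃ C > 0, ∀ l x p q a b : ℝ, 0 < p → 0 < q → 0 ≤ a → 0 ≤ b →
      Comparable C (EkA2 k x (x + a) (x + a + b) (l + q + p) (l + q) l)
        (exp (-(b * (l + q) + (a + b) * l))
          / ((1 + p * b) ^ k * (1 + q * a) ^ k * (1 + (p + q) * (a + b)) ^ (k + 1))) := by
  obtain ⟨C, hC, hcore⟩ := exists_comparable_integral_kernelCore hk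
  have hM : 0 < 6 * Gamma (3 * k) * Gamma (2 * k) / Gamma k ^ 4 := by positivity
  refine ⟨_, mul_pos hC (add_pos hM (inv_pos.2 hM)), fun l x p q a b hp hq ha hb ↦ ?_⟩
  have hfactor : 0 ≤ exp (-(b * (l + q) + (a + b) * l)) * ((p + q) ^ (2 * k))⁻¹ := by positivity
  have hE := ((hcore p q a b hp hq ha hb).mul_left hfactor).mul_left hM.le
  rw [← EkA2_affine_eq l x a b hk hp hq] at hE
  convert hE.trans (.const_mul_self hM (by positivity)) hC using 1
  field_simp

end Reduction

theorem estimate_C321_general (k : ℝ) (hk : 0 < k) :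
    ∃ C : ℝ, 0 < C ∧ ∀ l1 l2 l3 x1 x2 x3 : ℝ, l2 < l1 → l3 < l2 → x2 ≤ x3 → x1 ≤ x2 →
      Comparable C (EkA2 k x1 x2 x3 l1 l2 l3)
        (exp (l2 * (x2 - x3) + l3 * (x1 - x3)) /
          ((1 + (l1 - l2) * (x3 - x2)) ^ k * (1 + (l2 - l3) * (x2 - x1)) ^ k
            * (1 + (l1 - l3) * (x3 - x1)) ^ (k + 1))) := by
  obtain ⟨C, hC, hE⟩ := exists_comparable_EkA2_affine hk
  refine ⟨C, hC, fun l1 l2 l3 x1 x2 x3 h12 h23 hx32 hx21 ↦ ?_⟩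
  have h := hE l3 x1 (l1 - l2) (l2 - l3) (x2 - x1) (x3 - x2) (sub_pos.2 h12) (sub_pos.2 h23)
    (sub_nonneg.2 hx21) (sub_nonneg.2 hx32)
  convert h using 2 <;> ring_nf

/-- Theorem 4.1: sharp estimate of the `A₂` Dunkl kernel. -/
theorem estimate_C321 (k : ℝ) (hk : 0 < k) :
    ∃ C : ℝ, 0 < C ∧ ∀ l1 l2 l3 x1 x2 x3 : ℝ,
      l1 + l2 + l3 = 0 →
      l2 < l1 →
      l3 < l2 →
      x1 + x2 + x3 = 0 →
      x2 ≤ x3 →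
      x1 ≤ x2 →
      (C⁻¹ * (Real.exp (l1 * x3 + l2 * x2 + l3 * x1) /
          ((1 + (l1 - l2) * (x3 - x2)) ^ k * (1 + (l2 - l3) * (x2 - x1)) ^ k
            * (1 + (l1 - l3) * (x3 - x1)) ^ (k + 1)))
        ≤ EkA2 k x1 x2 x3 l1 l2 l3 ∧
      EkA2 k x1 x2 x3 l1 l2 l3
        ≤ C * (Real.exp (l1 * x3 + l2 * x2 + l3 * x1) /
          ((1 + (l1 - l2) * (x3 - x2)) ^ k * (1 + (l2 - l3) * (x2 - x1)) ^ k
            * (1 + (l1 - l3) * (x3 - x1)) ^ (k + 1)))) := by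
  obtain ⟨C, hC, hE⟩ := estimate_C321_general k hk
  refine ⟨C, hC, fun l1 l2 l3 x1 x2 x3 hl h12 h23 _ hx32 hx21 ↦ ?_⟩
  rw [show l1 * x3 + l2 * x2 + l3 * x1 = l2 * (x2 - x3) + l3 * (x1 - x3) by
    linear_combination x3 * hl]
  exact hE l1 l2 l3 x1 x2 x3 h12 h23 hx32 hx21
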